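/- arXiv:1410.8424 — 2 statements merged into one kernel-verified Lean document; each statement's English description precedes it below -/
import Mathlib

section
/- If Γ is a regular connected digraph whose adjacency matrix A is normal, has no undirected edges (A + Aᵀ is a {0,1} matrix), and has exactly four distinct eigenvalues k, τ, θ, θ̄ (with τ real and θ non-real), then the linear span of {I, A, Aᵀ, J − I − A − Aᵀ} is closed under matrix multiplication, i.e., Γ is a relation of a non-symmetric association scheme with three classes. -/
open Matrix

/-- The v×v all-ones matrix over ℝ. -/
def allOnes (v : ℕ) : Matrix (Fin v) (Fin v) ℝ := Matrix.of fun _ _ => 1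

open scoped ComplexOrder in
lemma aux_normal_ker {n : Type*} [Fintype n] [DecidableEq n] (T : Matrix n n ℂ)
    (hT : Tᴴ * T = T * Tᴴ) (x : n → ℂ) (hx : T *ᵥ x = 0) : Tᴴ *ᵥ x = 0 := by
  rw [← Matrix.self_mul_conjTranspose_mulVec_eq_zero, ← hT,
    Matrix.conjTranspose_mul_self_mulVec_eq_zero]
  exact hx

lemma aux_normal_sub {n : Type*} [Fintype n] [DecidableEq n] (T : Matrix n n ℂ)
    (hT : Tᴴ * T = T * Tᴴ) (μ : ℂ) :
    (T - μ • 1)ᴴ * (T - μ • 1) = (T - μ • 1) * (T - μ • 1)ᴴ := by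
  simp only [conjTranspose_sub, conjTranspose_smul, conjTranspose_one, sub_mul, mul_sub, hT,
    smul_mul_assoc, mul_smul_comm, one_mul, mul_one]
  module

lemma aux_normal_eig {n : Type*} [Fintype n] [DecidableEq n] (T : Matrix n n ℂ)
    (hT : Tᴴ * T = T * Tᴴ) (μ : ℂ) (x : n → ℂ) (hx : T *ᵥ x = μ • x) :
    Tᴴ *ᵥ x = (starRingEnd ℂ) μ • x := by
  have h := aux_normal_ker (T - μ • 1) (aux_normal_sub T hT μ) x (by
    rw [sub_mulVec, smul_mulVec, one_mulVec, hx, sub_self])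
  rw [conjTranspose_sub, conjTranspose_smul, conjTranspose_one, sub_mulVec, smul_mulVec,
    one_mulVec] at h
  exact sub_eq_zero.mp h

open scoped ComplexOrder in
lemma aux_normal_pow {n : Type*} [Fintype n] [DecidableEq n] (T : Matrix n n ℂ)
    (hT : Tᴴ * T = T * Tᴴ) (k : ℕ) (x : n → ℂ) (hx : (T ^ k) *ᵥ x = 0) : T *ᵥ x = 0 := by
  induction k generalizing x with
  | zero => simp at hx; simp [hx]
  | succ k ih =>
    have h1 : T *ᵥ (T *ᵥ x) = 0 := ih _ (by rw [mulVec_mulVec, ← pow_succ]; exact hx)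
    have h2 := aux_normal_ker T hT _ h1
    rw [mulVec_mulVec, Matrix.conjTranspose_mul_self_mulVec_eq_zero] at h2
    exact h2

lemma aux_span {n : Type*} [Fintype n] [DecidableEq n] (T N : Matrix n n ℂ)
    (hT : Tᴴ * T = T * Tᴴ) (h : ∀ (μ : ℂ) (x : n → ℂ), T *ᵥ x = μ • x → N *ᵥ x = 0) :
    N = 0 := by
  have key : LinearMap.ker (Matrix.toLin' N) = ⊤ := by
    rw [eq_top_iff, ← Module.End.iSup_maxGenEigenspace_eq_top (Matrix.toLin' T)]
    refine iSup_le fun μ x hx => ?_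
    rw [Module.End.mem_maxGenEigenspace] at hx
    obtain ⟨k, hk⟩ := hx
    have e : Matrix.toLin' T - μ • (1 : Module.End ℂ (n → ℂ)) = Matrix.toLin' (T - μ • 1) := by
      ext; simp
    rw [e, ← Matrix.toLin'_pow, Matrix.toLin'_apply] at hk
    have := aux_normal_pow _ (aux_normal_sub T hT μ) k x hk
    rw [sub_mulVec, smul_mulVec, one_mulVec, sub_eq_zero] at this
    rw [LinearMap.mem_ker, Matrix.toLin'_apply]
    exact h μ x this
  rw [LinearMap.ker_eq_top] at key
  exact (Matrix.toLin' (R := ℂ)).injective (by rw [key, map_zero])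

/-- If `P` acts on all eigenvectors with eigenvalue other than `k` as `a + b A + c Aᵀ`,
then `P` is a combination of `1, A, Aᵀ, J`. -/
lemma aux_key (v : ℕ) (k : ℝ) (A P : Matrix (Fin v) (Fin v) ℝ) (hv : 0 < v)
    (hreg : A * allOnes v = k • allOnes v ∧ allOnes v * A = k • allOnes v)
    (hnormal : A * Aᵀ = Aᵀ * A)
    (hconn : ∀ x : Fin v → ℂ,
      (A.map (Complex.ofReal)).mulVec x = (k : ℂ) • x → ∀ i j, x i = x j)
    (a b c e : ℝ) (hPJ : P * allOnes v = e • allOnes v)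
    (hP : ∀ (μ : ℂ) (x : Fin v → ℂ), x ≠ 0 → μ ≠ k →
      (A.map (Complex.ofReal)).mulVec x = μ • x →
      (Aᵀ.map (Complex.ofReal)).mulVec x = (starRingEnd ℂ) μ • x →
      (P.map (Complex.ofReal)).mulVec x = (a + b * μ + c * (starRingEnd ℂ) μ) • x) :
    ∃ d : ℝ, P = a • 1 + b • A + c • Aᵀ + d • allOnes v := by
  have hvR : (v : ℝ) ≠ 0 := by positivity
  have hJt : (allOnes v)ᵀ = allOnes v := by ext; simp [allOnes]
  have hAtJ : Aᵀ * allOnes v = k • allOnes v := by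
    have := congrArg transpose hreg.2
    rwa [transpose_mul, transpose_smul, hJt] at this
  have hJJ : allOnes v * allOnes v = (v : ℝ) • allOnes v := by
    ext; simp [allOnes, mul_apply]
  refine ⟨(e - a - b * k - c * k) / v, ?_⟩
  set d : ℝ := (e - a - b * k - c * k) / v with hd
  set N := P - (a • 1 + b • A + c • Aᵀ + d • allOnes v) with hN
  have hNJ : N * allOnes v = 0 := by
    rw [hN]
    simp only [sub_mul, add_mul, smul_mul_assoc, hPJ, hreg.1, hAtJ, hJJ, one_mul, smul_smul,
      ← sub_smul, ← add_smul]
    have : e - (a + b * k + c * k + d * v) = 0 := by rw [hd]; field_simp; ring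
    rw [this, zero_smul]
  have hconj : (A.map Complex.ofReal)ᴴ = Aᵀ.map Complex.ofReal := by
    ext; simp [conjTranspose_apply]
  have hmul : ∀ X Y : Matrix (Fin v) (Fin v) ℝ, (X * Y).map Complex.ofReal =
      X.map Complex.ofReal * Y.map Complex.ofReal := fun X Y =>
    Matrix.map_mul (f := Complex.ofRealHom)
  have hn' : (A.map Complex.ofReal)ᴴ * A.map Complex.ofReal =
      A.map Complex.ofReal * (A.map Complex.ofReal)ᴴ := by
    rw [hconj, ← hmul, ← hmul, hnormal]
  have hN0 : N.map Complex.ofReal = 0 := by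
    refine aux_span _ _ hn' fun μ x hx => ?_
    by_cases hx0 : x = 0
    · simp [hx0]
    by_cases hμ : μ = k
    · subst hμ
      have hc := hconn x hx
      ext i
      have h1 := congrFun (congrFun hNJ i) i
      simp only [mul_apply, allOnes, of_apply, mul_one, Matrix.zero_apply] at h1
      simp only [mulVec, dotProduct, map_apply, Pi.zero_apply]
      simp_rw [fun j => hc j i]
      rw [← Finset.sum_mul, ← Complex.ofReal_sum, h1]; simp
    · have hxt := aux_normal_eig _ hn' μ x hx
      rw [hconj] at hxt
      have h1 := hP μ x hx0 hμ hx hxt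
      have h2 : ((allOnes v).map Complex.ofReal) *ᵥ x = 0 := by
        have h3 : ((allOnes v).map Complex.ofReal) *ᵥ ((A.map Complex.ofReal) *ᵥ x) =
            (k : ℂ) • ((allOnes v).map Complex.ofReal) *ᵥ x := by
          rw [mulVec_mulVec, ← hmul, hreg.2, ← smul_mulVec]
          congr 1; ext; simp
        rw [hx, mulVec_smul, ← sub_eq_zero, ← sub_smul] at h3
        exact (smul_eq_zero.mp h3).resolve_left (sub_ne_zero.mpr hμ)
      have h4 : N.map Complex.ofReal = P.map Complex.ofReal - ((a : ℂ) • 1 +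
          (b : ℂ) • A.map Complex.ofReal + (c : ℂ) • Aᵀ.map Complex.ofReal +
          (d : ℂ) • (allOnes v).map Complex.ofReal) := by
        ext i j
        by_cases hij : i = j <;> simp [hN, one_apply, hij]
      rw [h4]
      simp only [sub_mulVec, add_mulVec, smul_mulVec, one_mulVec, h1, hx, hxt, h2, smul_zero]
      module
  have : N = 0 := by
    ext i j
    have := congrFun (congrFun hN0 i) j
    simpa using this
  rw [hN] at this
  exact sub_eq_zero.mp this

/-- A `{0,1}`-matrix does not have the eigenvalue `-1/2`. -/
lemma aux_half (v : ℕ) (A : Matrix (Fin v) (Fin v) ℝ) (h01 : ∀ i j, A i j = 0 ∨ A i j = 1)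
    (x : Fin v → ℂ) (hx0 : x ≠ 0) (hx : (A.map (Complex.ofReal)).mulVec x = (-1 / 2 : ℂ) • x) :
    False := by
  classical
  let B : Matrix (Fin v) (Fin v) ℤ := Matrix.of fun i j => if A i j = 0 then 0 else 1
  have hB : A.map Complex.ofReal = B.map (Int.castRingHom ℂ) := by
    ext i j
    rcases h01 i j with h | h <;> simp [B, h]
  let C : Matrix (Fin v) (Fin v) ℤ := Matrix.of fun i j => (1 : Matrix (Fin v) (Fin v) ℤ) i j + 2 * B i j
  have hC : C.map (Int.castRingHom ℂ) = 1 + (2 : ℂ) • A.map Complex.ofReal := by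
    rw [hB]
    ext i j
    by_cases hij : i = j <;> simp [C, hij, one_apply]
  have hdet : (C.map (Int.castRingHom ℂ)).det = 0 := by
    rw [← Matrix.exists_mulVec_eq_zero_iff]
    refine ⟨x, hx0, ?_⟩
    rw [hC, add_mulVec, one_mulVec, smul_mulVec, hx]
    module
  have h2 : (C.map (Int.castRingHom (ZMod 2))) = 1 := by
    ext i j
    have : (2 : ZMod 2) = 0 := rfl
    by_cases hij : i = j <;> simp [C, hij, one_apply, this]
  have hd : C.det = 0 := by
    have := (Int.castRingHom ℂ).map_det C
    rw [RingHom.mapMatrix_apply, hdet] at this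
    simpa using this
  have h3 := (Int.castRingHom (ZMod 2)).map_det C
  rw [RingHom.mapMatrix_apply, h2, hd] at h3
  simp at h3

/-- A regular connected digraph with normal adjacency matrix, no undirected
    edges, and exactly four distinct eigenvalues k, τ, θ, θ̄ is a relation of
    a non-symmetric association scheme with three classes: the span of
    {I, A, Aᵀ, J − I − A − Aᵀ} is closed under matrix multiplication. -/
theorem stmt15 (v : ℕ) (k : ℝ) (τ θ : ℂ) (A : Matrix (Fin v) (Fin v) ℝ)
    (h01 : ∀ i j, A i j = 0 ∨ A i j = 1) (hdiag : ∀ i, A i i = 0)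
    (hasym : ∀ i j, (A + Aᵀ) i j = 0 ∨ (A + Aᵀ) i j = 1)
    (hreg : A * allOnes v = k • allOnes v ∧ allOnes v * A = k • allOnes v)
    (hnormal : A * Aᵀ = Aᵀ * A)
    (hconn : ∀ x : Fin v → ℂ,
      (A.map (Complex.ofReal)).mulVec x = (k : ℂ) • x → ∀ i j, x i = x j)
    (hτ : τ.im = 0) (hθ : θ.im ≠ 0)
    (hdist : (k : ℂ) ≠ τ ∧ (k : ℂ) ≠ θ ∧ (k : ℂ) ≠ (starRingEnd ℂ) θ ∧
      τ ≠ θ ∧ τ ≠ (starRingEnd ℂ) θ ∧ θ ≠ (starRingEnd ℂ) θ)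
    (heig : ∀ μ : ℂ, (∃ x : Fin v → ℂ, x ≠ 0 ∧
        (A.map (Complex.ofReal)).mulVec x = μ • x) ↔
      (μ = (k : ℂ) ∨ μ = τ ∨ μ = θ ∨ μ = (starRingEnd ℂ) θ)) :
    ∀ X Y : Matrix (Fin v) (Fin v) ℝ,
      X ∈ Submodule.span ℝ
        ({1, A, Aᵀ, allOnes v - 1 - A - Aᵀ} : Set (Matrix (Fin v) (Fin v) ℝ)) →
      Y ∈ Submodule.span ℝ
        ({1, A, Aᵀ, allOnes v - 1 - A - Aᵀ} : Set (Matrix (Fin v) (Fin v) ℝ)) →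
      X * Y ∈ Submodule.span ℝ
        ({1, A, Aᵀ, allOnes v - 1 - A - Aᵀ} : Set (Matrix (Fin v) (Fin v) ℝ)) := by
  classical
  obtain ⟨hkτ, hkθ, hkθ', -, -, -⟩ := hdist
  obtain ⟨t, rfl⟩ : ∃ t : ℝ, τ = (t : ℂ) := ⟨τ.re, by apply Complex.ext <;> simp [hτ]⟩
  have hv : 0 < v := by
    obtain ⟨x, hx, -⟩ := (heig k).mpr (Or.inl rfl)
    rcases Nat.eq_zero_or_pos v with h | h
    · subst h; exact absurd (Subsingleton.elim x 0) hx
    · exact h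
  have hJt : (allOnes v)ᵀ = allOnes v := by ext; simp [allOnes]
  have hAtJ : Aᵀ * allOnes v = k • allOnes v := by
    have := congrArg transpose hreg.2
    rwa [transpose_mul, transpose_smul, hJt] at this
  have hJAt : allOnes v * Aᵀ = k • allOnes v := by
    have := congrArg transpose hreg.1
    rwa [transpose_mul, transpose_smul, hJt] at this
  have hJJ : allOnes v * allOnes v = (v : ℝ) • allOnes v := by
    ext; simp [allOnes, mul_apply]
  have hmul : ∀ X Y : Matrix (Fin v) (Fin v) ℝ, (X * Y).map Complex.ofReal =
      X.map Complex.ofReal * Y.map Complex.ofReal := fun X Y =>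
    Matrix.map_mul (f := Complex.ofRealHom)
  -- the three eigenvalues other than `k` are not collinear
  have hre : θ.re ≠ t := by
    intro hre
    obtain ⟨d, hd⟩ := aux_key v k A (A + Aᵀ) hv hreg hnormal hconn (2 * t) 0 0 (2 * k)
      (by rw [add_mul, hreg.1, hAtJ, two_mul, add_smul]) (by
        intro μ x hx0 hμ hx hxt
        have h1 : (A + Aᵀ).map Complex.ofReal = A.map Complex.ofReal + Aᵀ.map Complex.ofReal := by
          ext; simp
        rw [h1, add_mulVec, hx, hxt, ← add_smul]
        congr 1
        rcases (heig μ).mp ⟨x, hx0, hx⟩ with h | h | h | h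
        · exact absurd h hμ
        all_goals
          subst h
          apply Complex.ext <;> simp [hre] <;> ring)
    have hex : ∃ i j, A i j = 1 := by
      by_contra! hne
      have hA : A = 0 := by
        ext i j
        exact (h01 i j).resolve_right (hne i j)
      obtain ⟨x, hx0, hx⟩ := (heig θ).mpr (by tauto)
      have : θ • x = 0 := by rw [← hx, hA]; ext; simp [mulVec, dotProduct]
      rcases smul_eq_zero.mp this with h | h
      · exact hθ (by simp [h])
      · exact hx0 h
    obtain ⟨i, j, hij⟩ := hex
    have hne : i ≠ j := by
      rintro rfl
      rw [hdiag] at hij; exact zero_ne_one hij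
    have e1 := congrFun (congrFun hd i) i
    have e2 := congrFun (congrFun hd i) j
    have e3 := hasym i j
    simp [allOnes, hdiag] at e1
    simp [allOnes, hne, hij] at e2
    simp [hij] at e3
    have ht : t = -1 / 2 := by
      rcases h01 j i with h | h
      · rw [h] at e2; linarith
      · rw [h] at e3; norm_num at e3
    obtain ⟨x, hx0, hx⟩ := (heig t).mpr (by tauto)
    refine aux_half v A h01 x hx0 ?_
    rw [hx, ht]; push_cast; rfl
  -- real interpolation on the three eigenvalues
  have hinterp : ∀ (P : Matrix (Fin v) (Fin v) ℝ) (e s r q : ℝ),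
      P * allOnes v = e • allOnes v →
      (∀ (μ : ℂ) (x : Fin v → ℂ), (A.map (Complex.ofReal)).mulVec x = μ • x →
        (Aᵀ.map (Complex.ofReal)).mulVec x = (starRingEnd ℂ) μ • x →
        (P.map (Complex.ofReal)).mulVec x =
          (s * μ ^ 2 + r * (μ * (starRingEnd ℂ) μ) + q * ((starRingEnd ℂ) μ) ^ 2) • x) →
      ∃ a b c d : ℝ, P = a • 1 + b • A + c • Aᵀ + d • allOnes v := by
    intro P e s r q hPJ hP
    have hsub : θ.re - t ≠ 0 := sub_ne_zero.mpr hre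
    -- real part and imaginary part of the value at `θ`
    set R : ℝ := (s + q) * (θ.re ^ 2 - θ.im ^ 2) + r * (θ.re ^ 2 + θ.im ^ 2) with hR
    set K : ℝ := (s - q) * (2 * θ.re) with hK
    set p : ℝ := (R - (s + r + q) * t ^ 2) / (θ.re - t) with hp
    have hp' : p * (θ.re - t) = R - (s + r + q) * t ^ 2 := by rw [hp]; field_simp
    obtain ⟨d, hd⟩ := aux_key v k A P hv hreg hnormal hconn
      ((s + r + q) * t ^ 2 - p * t) ((p + K) / 2) ((p - K) / 2) e hPJ (by
        intro μ x hx0 hμ hx hxt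
        rw [hP μ x hx hxt]
        congr 1
        rcases (heig μ).mp ⟨x, hx0, hx⟩ with h | h | h | h
        · exact absurd h hμ
        · subst h
          rw [Complex.conj_ofReal]; push_cast; ring
        · subst h
          apply Complex.ext
          · simp [pow_two]; nlinarith [hp', hR]
          · simp [pow_two]; rw [hK]; ring
        · subst h
          apply Complex.ext
          · simp [pow_two]; nlinarith [hp', hR]
          · simp [pow_two]; rw [hK]; ring)
    exact ⟨_, _, _, d, hd⟩
  set S := Submodule.span ℝ
        ({1, A, Aᵀ, allOnes v - 1 - A - Aᵀ} : Set (Matrix (Fin v) (Fin v) ℝ)) with hS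
  have m1 : (1 : Matrix (Fin v) (Fin v) ℝ) ∈ S := Submodule.subset_span (by simp)
  have mA : A ∈ S := Submodule.subset_span (by simp)
  have mAt : Aᵀ ∈ S := Submodule.subset_span (by simp)
  have mJ : allOnes v ∈ S := by
    have h : allOnes v - 1 - A - Aᵀ ∈ S := Submodule.subset_span (by simp)
    have := S.add_mem (S.add_mem (S.add_mem h mAt) mA) m1
    simpa using this
  have hcomb : ∀ P : Matrix (Fin v) (Fin v) ℝ,
      (∃ a b c d : ℝ, P = a • 1 + b • A + c • Aᵀ + d • allOnes v) → P ∈ S := by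
    rintro P ⟨a, b, c, d, rfl⟩
    exact S.add_mem (S.add_mem (S.add_mem (S.smul_mem _ m1) (S.smul_mem _ mA))
      (S.smul_mem _ mAt)) (S.smul_mem _ mJ)
  have mAA : A * A ∈ S := hcomb _ (hinterp _ (k * k) 1 0 0
    (by rw [mul_assoc, hreg.1, mul_smul_comm, hreg.1, smul_smul])
    (by
      intro μ x hx hxt
      rw [hmul, ← mulVec_mulVec, hx, mulVec_smul, hx, smul_smul]
      congr 1; push_cast; ring))
  have mAAt : A * Aᵀ ∈ S := hcomb _ (hinterp _ (k * k) 0 1 0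
    (by rw [mul_assoc, hAtJ, mul_smul_comm, hreg.1, smul_smul])
    (by
      intro μ x hx hxt
      rw [hmul, ← mulVec_mulVec, hxt, mulVec_smul, hx, smul_smul]
      congr 1; push_cast; ring))
  have mAtAt : Aᵀ * Aᵀ ∈ S := hcomb _ (hinterp _ (k * k) 0 0 1
    (by rw [mul_assoc, hAtJ, mul_smul_comm, hAtJ, smul_smul])
    (by
      intro μ x hx hxt
      rw [hmul, ← mulVec_mulVec, hxt, mulVec_smul, hxt, smul_smul]
      congr 1; push_cast; ring))
  have mAtA : Aᵀ * A ∈ S := hnormal ▸ mAAt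
  -- the span in terms of the simpler generators
  set G : Set (Matrix (Fin v) (Fin v) ℝ) := {1, A, Aᵀ, allOnes v} with hG
  have hSG : S ≤ Submodule.span ℝ G := by
    rw [hS, Submodule.span_le]
    have g1 : (1 : Matrix (Fin v) (Fin v) ℝ) ∈ Submodule.span ℝ G :=
      Submodule.subset_span (by simp [hG])
    have gA : A ∈ Submodule.span ℝ G := Submodule.subset_span (by simp [hG])
    have gAt : Aᵀ ∈ Submodule.span ℝ G := Submodule.subset_span (by simp [hG])
    have gJ : allOnes v ∈ Submodule.span ℝ G := Submodule.subset_span (by simp [hG])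
    rintro X (rfl | rfl | rfl | rfl)
    · exact g1
    · exact gA
    · exact gAt
    · exact Submodule.sub_mem _ (Submodule.sub_mem _ (Submodule.sub_mem _ gJ g1) gA) gAt
  intro X Y hX hY
  have hXY : X * Y ∈ Submodule.span ℝ G * Submodule.span ℝ G :=
    Submodule.mul_mem_mul (hSG hX) (hSG hY)
  rw [Submodule.span_mul_span] at hXY
  refine (Submodule.span_le.mpr ?_) hXY
  rintro _ ⟨U, hU, V, hV, rfl⟩
  have kJ : ∀ c : ℝ, c • allOnes v ∈ S := fun c => S.smul_mem c mJ
  simp only [hG, Set.mem_insert_iff, Set.mem_singleton_iff] at hU hV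
  change U * V ∈ S
  rcases hU with hU | hU | hU | hU <;> rcases hV with hV | hV | hV | hV <;> rw [hU, hV] <;>
    (try simp only [one_mul, mul_one, hreg.1, hreg.2, hAtJ, hJAt, hJJ]) <;>
    first
      | assumption
      | exact kJ _
end

section
/- For every multiple k of 3 such that k+1 is a prime power, there exists a subset S of ℤ_v with v = (k²+3k+3)/3 such that the Cayley digraph Cay(ℤ_v, S) is an asymmetric normally regular digraph with parameters (v, k, 1, 3). -/
lemma nrd_of_pds {A C : Type*} [AddCommGroup A] [AddCommGroup C] [Fintype A]
    [DecidableEq A] [DecidableEq C] (π : A →+ C)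
    (t : A) (ht : t ≠ 0)  (hker : ∀ x, π x = 0 ↔ x = 0 ∨ x = t ∨ x = -t)
    (hfib : ∀ g : C, (Finset.univ.filter (fun a => π a = g)).card = 3)
    (D : Finset A) (hD : ∀ g : A, g ≠ 0 → ∃! x, x ∈ D ∧ x + g ∈ D) :
    ∃ S : Finset C, 0 ∉ S ∧ S.card + 2 = D.card ∧ (∀ s ∈ S, -s ∉ S) ∧
      ∀ g : C, g ≠ 0 →
        ((S ×ˢ S).filter (fun p => p.2 - p.1 = g)).card =
          if g ∈ S ∨ -g ∈ S then 1 else 3 := by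
  obtain ⟨x0, ⟨hx0, hx1⟩, hu⟩ := hD t ht
  have hinj : ∀ x ∈ D, ∀ y ∈ D, π x = π y → x ≠ y →
      (x = x0 ∧ y = x0 + t) ∨ (y = x0 ∧ x = x0 + t) := by
    intro x hx y hy h hne
    have h0 : π (y - x) = 0 := by simp [h]
    rcases (hker _).1 h0 with h1 | h1 | h1
    · exact absurd (sub_eq_zero.1 h1).symm hne
    · left
      have e : y = x + t := by rw [← h1]; abel
      have := hu x ⟨hx, e ▸ hy⟩
      exact ⟨this, this ▸ e⟩
    · right
      have e : x = y + t := by rw [← neg_eq_iff_eq_neg.2 h1]; abel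
      have := hu y ⟨hy, e ▸ hx⟩
      exact ⟨this, this ▸ e⟩
  have hne : x0 ≠ x0 + t := by simpa using ht
  have hπ : π (x0 + t) = π x0 := by simp [(hker t).2 (by simp)]
  set T : Finset A := {x0, x0 + t} with hT
  have hTD : T ⊆ D := by
    intro z hz; simp [hT] at hz; rcases hz with rfl | rfl <;> assumption
  set D' := D \ T with hD'
  let ρ : A → C := fun x => π x - π x0
  have memD' : ∀ x, x ∈ D' ↔ x ∈ D ∧ x ≠ x0 ∧ x ≠ x0 + t := by
    intro x; simp [hD', hT]
  have ρinj : ∀ x ∈ D', ∀ y ∈ D', ρ x = ρ y → x = y := by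
    intro x hx y hy h
    by_contra hxy
    rw [memD'] at hx hy
    rcases hinj x hx.1 y hy.1 (by simpa [ρ] using h) hxy with h | h
    · exact hx.2.1 h.1
    · exact hy.2.1 h.1
  have h0S : (0 : C) ∉ D'.image ρ := by
    intro h
    obtain ⟨x, hx, h⟩ := Finset.mem_image.1 h
    rw [memD'] at hx
    rcases hinj x hx.1 x0 hx0 (by simpa [ρ, sub_eq_zero] using h) hx.2.1 with h | h
    · exact hx.2.1 h.1
    · exact hx.2.2 h.2
  have key : ∀ g : C, g ≠ 0 →
      (((D'.image ρ) ×ˢ (D'.image ρ)).filter (fun p => p.2 - p.1 = g)).card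
        + 2 * (if g ∈ D'.image ρ then 1 else 0) + 2 * (if -g ∈ D'.image ρ then 1 else 0) = 3 := by
    intro g hg
    have hDD : ∑ x ∈ D, ∑ y ∈ D, (if π y - π x = g then 1 else 0) = 3 := by
      rw [← Finset.sum_product', ← Finset.card_filter, ← hfib g]
      apply Finset.card_bij (fun p _ => p.2 - p.1)
      · rintro ⟨x, y⟩ h
        simp at h ⊢; exact h.2
      · rintro ⟨x, y⟩ h ⟨x', y'⟩ h' e
        simp at h h' e
        have hn : y - x ≠ 0 := by
          intro h0; apply hg; rw [← h.2, ← map_sub, h0, map_zero]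
        have e1 := (hD _ hn).unique (y₁ := x) (y₂ := x') ⟨h.1.1, by simpa using h.1.2⟩
          ⟨h'.1.1, by rw [e]; simpa using h'.1.2⟩
        subst e1
        simpa using e
      · intro a ha
        simp at ha
        have hn : a ≠ 0 := by rintro rfl; apply hg; simpa using ha.symm
        obtain ⟨x, hx, -⟩ := hD a hn
        refine ⟨(x, x + a), ?_, ?_⟩ <;> simp [hx, ha]
    have e1 : ∑ y ∈ D', (if π y - π x0 = g then 1 else 0) =
        if g ∈ D'.image ρ then 1 else 0 := by
      have : ∑ s ∈ D'.image ρ, (if s = g then 1 else 0) =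
        ∑ y ∈ D', (if π y - π x0 = g then 1 else 0) := Finset.sum_image ρinj
      rw [← this]; simp
    have e2 : ∑ y ∈ D', (if π x0 - π y = g then 1 else 0) =
        if -g ∈ D'.image ρ then 1 else 0 := by
      have : ∑ s ∈ D'.image ρ, (if s = -g then 1 else 0) =
        ∑ y ∈ D', (if π y - π x0 = -g then 1 else 0) := Finset.sum_image ρinj
      have h2 : ∀ y, (π x0 - π y = g) ↔ π y - π x0 = -g := by
        intro y; rw [← neg_inj, neg_sub]
      simp only [h2]
      rw [← this]; simp
    have e3 : (((D'.image ρ) ×ˢ (D'.image ρ)).filter (fun p => p.2 - p.1 = g)).card =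
        ∑ x ∈ D', ∑ y ∈ D', (if π y - π x = g then 1 else 0) := by
      rw [Finset.card_filter, Finset.sum_product, Finset.sum_image ρinj]
      refine Finset.sum_congr rfl fun x _ => ?_
      rw [Finset.sum_image ρinj]
      simp [ρ]
    rw [← Finset.sum_sdiff hTD] at hDD
    simp_rw [← Finset.sum_sdiff hTD] at hDD
    rw [← hD', Finset.sum_add_distrib, ← e3] at hDD
    simp only [hT, Finset.sum_pair hne, hπ, sub_self, hg.symm, if_false, add_zero,
      Finset.sum_add_distrib] at hDD
    rw [e1, e2] at hDD
    omega
  refine ⟨D'.image ρ, h0S, ?_, ?_, ?_⟩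
  · rw [Finset.card_image_of_injOn (fun x hx y hy h => ρinj x hx y hy h)]
    have := Finset.card_sdiff_add_card_eq_card hTD
    rwa [Finset.card_pair hne] at this
  · intro s hs hs'
    have := key s (by rintro rfl; exact h0S hs)
    simp only [if_pos hs, if_pos hs'] at this
    omega
  · intro g hg
    have := key g hg
    split_ifs at this ⊢ <;> first | omega | tauto

lemma card_fiber_three {A C : Type*} [AddCommGroup A] [AddCommGroup C] [Fintype A]
    [DecidableEq A] [DecidableEq C] (π : A →+ C) (hs : Function.Surjective π)
    (t : A) (ht : t ≠ 0) (ht2 : t ≠ -t) (hker : ∀ x, π x = 0 ↔ x = 0 ∨ x = t ∨ x = -t) (g : C) :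
    (Finset.univ.filter (fun a => π a = g)).card = 3 := by
  obtain ⟨a, rfl⟩ := hs g
  have : (Finset.univ.filter (fun b => π b = π a)) =
      ({0, t, -t} : Finset A).image (fun x => x + a) := by
    ext b
    simp only [Finset.mem_filter, Finset.mem_univ, true_and, Finset.mem_image]
    constructor
    · intro h
      exact ⟨b - a, by simpa using (hker (b - a)).1 (by simp [h]), by simp⟩
    · rintro ⟨x, hx, rfl⟩
      simpa using (hker x).2 (by simpa using hx)
  rw [this, Finset.card_image_of_injective _ (add_left_injective a)]
  rw [Finset.card_eq_three]
  exact ⟨0, t, -t, ht.symm, by simpa using ht, ht2, rfl⟩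

lemma singer_aux {K L : Type*} [Field K] [Field L] [Algebra K L] [FiniteDimensional K L]
    (h3 : Module.finrank K L = 3) (f : L →ₗ[K] K) (hf : f ≠ 0) (γ : L)
    (hγ : ∀ c : K, algebraMap K L c ≠ γ) :
    ∃ v : L, v ≠ 0 ∧ f v = 0 ∧ f (v * γ) = 0 ∧
      ∀ w : L, f w = 0 → f (w * γ) = 0 → ∃ c : K, c • v = w := by
  let F : L →ₗ[K] (K × K) := f.prod (f ∘ₗ LinearMap.mulRight K γ)
  have hsurj : LinearMap.range F = ⊤ := by
    by_contra hne
    obtain ⟨φ, hφ, hle⟩ := Submodule.exists_le_ker_of_lt_top _ (lt_top_iff_ne_top.2 hne)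
    have h1 : ∀ x, f x * φ (1, 0) + f (x * γ) * φ (0, 1) = 0 := by
      intro x
      have := hle (LinearMap.mem_range_self F x)
      rw [LinearMap.mem_ker] at this
      have e : F x = f x • ((1, 0) : K × K) + f (x * γ) • ((0, 1) : K × K) := by
        simp [F]
      rw [e, map_add, map_smul, map_smul] at this
      simpa using this
    set a := φ (1, 0)
    set b := φ (0, 1)
    have h2 : ∀ x, f (x * (algebraMap K L a + algebraMap K L b * γ)) = 0 := by
      intro x
      have e : x * (algebraMap K L a + algebraMap K L b * γ) = a • x + b • (x * γ) := by
        rw [Algebra.smul_def, Algebra.smul_def]; ring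
      rw [e, map_add, map_smul, map_smul, smul_eq_mul, smul_eq_mul, ← h1 x]; ring
    have h3 : algebraMap K L a + algebraMap K L b * γ ≠ 0 := by
      intro h
      by_cases hb : b = 0
      · have ha : a = 0 := by simpa [hb] using h
        apply hφ
        ext
        · simpa using ha
        · simpa using hb
      · apply hγ (-a / b)
        have : algebraMap K L b ≠ 0 := by simpa using hb
        rw [map_div₀, map_neg, div_eq_iff this]
        linear_combination -h
    apply hf
    ext y
    have := h2 (y / (algebraMap K L a + algebraMap K L b * γ))
    rw [div_mul_cancel₀ _ h3] at this
    simpa using this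
  have hk : Module.finrank K (LinearMap.ker F) = 1 := by
    have := LinearMap.finrank_range_add_finrank_ker F
    rw [hsurj, finrank_top, h3] at this
    simp at this
    omega
  obtain ⟨v, hv, hall⟩ := finrank_eq_one_iff'.1 hk
  have hm : ∀ w, w ∈ LinearMap.ker F ↔ f w = 0 ∧ f (w * γ) = 0 := by
    intro w; simp [F]
  refine ⟨v, by simpa using hv, ((hm _).1 v.2).1, ((hm _).1 v.2).2, ?_⟩
  intro w h1 h2
  obtain ⟨c, hc⟩ := hall ⟨w, (hm w).2 ⟨h1, h2⟩⟩
  exact ⟨c, by simpa using congrArg Subtype.val hc⟩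

lemma singer_field (K L : Type*) [Field K] [Field L] [Finite K] [Finite L] [Algebra K L]
    (h3 : Module.finrank K L = 3) (hL : Nat.card L = Nat.card K ^ 3) :
    ∃ D : Finset (ZMod (Nat.card K ^ 2 + Nat.card K + 1)),
      ∀ g : ZMod (Nat.card K ^ 2 + Nat.card K + 1), g ≠ 0 → ∃! x, x ∈ D ∧ x + g ∈ D := by
  classical
  have hK1 : 1 < Nat.card K := Finite.one_lt_card
  set q := Nat.card K with hq
  let H : Subgroup Lˣ := (Units.map (algebraMap K L).toMonoidHom).range
  have hinjU : Function.Injective (Units.map (algebraMap K L).toMonoidHom) :=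
    Units.map_injective (algebraMap K L).injective
  have hcard : Nat.card (Lˣ ⧸ H) = q ^ 2 + q + 1 := by
    have h1 := H.card_eq_card_quotient_mul_card_subgroup
    have h2 : Nat.card H = Nat.card Kˣ :=
      (Nat.card_congr (MonoidHom.ofInjective hinjU).toEquiv).symm
    rw [h2, Nat.card_units, Nat.card_units, hL, ← hq] at h1
    have h4 : q ^ 3 - 1 = (q ^ 2 + q + 1) * (q - 1) := by
      obtain ⟨r, hr⟩ : ∃ r, q = r + 1 := ⟨q - 1, by omega⟩
      rw [hr]
      have : (r + 1) ^ 3 = ((r + 1) ^ 2 + (r + 1) + 1) * r + 1 := by ring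
      rw [this]; simp
    rw [h4] at h1
    exact (Nat.eq_of_mul_eq_mul_right (by omega) h1).symm
  have hcyc : IsCyclic (Lˣ ⧸ H) := inferInstance
  let e := zmodCyclicMulEquiv hcyc
  rw [hcard] at e
  let φ : Lˣ → ZMod (q ^ 2 + q + 1) := fun u => (e.symm (QuotientGroup.mk u)).toAdd
  have φmul : ∀ u w, φ (u * w) = φ u + φ w := by
    intro u w; simp [φ]
  have φsurj : ∀ g, ∃ u, φ u = g := by
    intro g
    obtain ⟨u, hu⟩ := QuotientGroup.mk_surjective (e (Multiplicative.ofAdd g))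
    exact ⟨u, by simp [φ, hu]⟩
  have φeq : ∀ u w, φ u = φ w ↔ ∃ c : Kˣ, algebraMap K L c * u = w := by
    intro u w
    have : φ u = φ w ↔ (QuotientGroup.mk u : Lˣ ⧸ H) = QuotientGroup.mk w := by
      simp [φ]
    rw [this, QuotientGroup.eq]
    constructor
    · rintro ⟨c, hc⟩
      refine ⟨c, ?_⟩
      have h := congrArg (fun z => ((z * u : Lˣ) : L)) hc
      simpa [mul_comm] using h
    · rintro ⟨c, hc⟩
      refine ⟨c, ?_⟩
      ext
      simp [← hc]
      field_simp
  have φone : φ 1 = 0 := by simp [φ]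
  have : Module.Finite K L := Module.finite_of_finrank_pos (by omega)
  obtain ⟨f, hf⟩ : ∃ f : L →ₗ[K] K, f ≠ 0 := by
    obtain ⟨f, hf, -⟩ := Submodule.exists_le_ker_of_lt_top (⊥ : Submodule K L) bot_lt_top
    exact ⟨f, hf⟩
  have fsm : ∀ (c : K) (u : L), f u = 0 → f (algebraMap K L c * u) = 0 := by
    intro c u h
    rw [← Algebra.smul_def, map_smul, h, smul_zero]
  have hW : ∀ u w : Lˣ, φ u = φ w → f u = 0 → f w = 0 := by
    intro u w h h0
    obtain ⟨c, hc⟩ := (φeq _ _).1 h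
    rw [← hc]; exact fsm _ _ h0
  refine ⟨Finset.univ.filter (fun x => ∃ u, φ u = x ∧ f u = 0), ?_⟩
  have hD : ∀ u : Lˣ, (φ u ∈ Finset.univ.filter (fun x => ∃ u : Lˣ, φ u = x ∧ f u = 0)) ↔ f u = 0 := by
    intro u
    simp only [Finset.mem_filter, Finset.mem_univ, true_and]
    exact ⟨fun ⟨w, hw, h⟩ => hW _ _ hw h, fun h => ⟨u, rfl, h⟩⟩
  intro g hg
  obtain ⟨γ, rfl⟩ := φsurj g
  obtain ⟨v, hv, h1, h2, hall⟩ := singer_aux h3 f hf (γ : L) (by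
    intro c hc
    apply hg
    rw [← φone, eq_comm, φeq]
    have hc0 : c ≠ 0 := by rintro rfl; apply γ.ne_zero; simp [← hc]
    exact ⟨Units.mk0 c hc0, by simp [hc]⟩)
  refine ⟨φ (Units.mk0 v hv), ⟨(hD _).2 h1, ?_⟩, ?_⟩
  · rw [← φmul, hD]; simpa using h2
  · intro x hx
    obtain ⟨w, rfl⟩ := φsurj x
    rw [← φmul, hD, hD] at hx
    obtain ⟨c, hc⟩ := hall w hx.1 (by simpa using hx.2)
    rw [eq_comm, φeq]
    have hc0 : c ≠ 0 := by rintro rfl; apply w.ne_zero; simp [← hc]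
    exact ⟨Units.mk0 c hc0, by simpa [Algebra.smul_def] using hc⟩

lemma singer_hom (n : ℕ) (hn : IsPrimePow n) :
    ∃ D : Finset (ZMod (n ^ 2 + n + 1)),
      ∀ g : ZMod (n ^ 2 + n + 1), g ≠ 0 → ∃! x, x ∈ D ∧ x + g ∈ D := by
  obtain ⟨p, m, hp, hm, rfl⟩ := hn
  have : Fact p.Prime := ⟨hp.nat_prime⟩
  have hK : Nat.card (GaloisField p m) = p ^ m := GaloisField.card p m hm.ne'
  rw [← hK]
  exact singer_field (GaloisField p m) (FiniteField.Extension (GaloisField p m) p 3)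
    (FiniteField.finrank_extension _ p 3) (FiniteField.natCard_extension _ p 3)

lemma pds_card {A : Type*} [AddCommGroup A] [Fintype A] [DecidableEq A] (D : Finset A)
    (hD : ∀ g : A, g ≠ 0 → ∃! x, x ∈ D ∧ x + g ∈ D) :
    D.card * D.card = D.card + (Fintype.card A - 1) := by
  have h1 : D.offDiag.card = Fintype.card A - 1 := by
    rw [← Finset.card_univ, ← Finset.card_erase_of_mem (Finset.mem_univ (0 : A))]
    apply Finset.card_bij (fun p _ => p.2 - p.1)
    · rintro ⟨x, y⟩ h
      simp [sub_eq_zero] at h ⊢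
      exact fun e => h.2.2 e.symm
    · rintro ⟨x, y⟩ h ⟨x', y'⟩ h' e
      simp at h h' e
      have hn : y - x ≠ 0 := by rw [sub_ne_zero]; exact fun e => h.2.2 e.symm
      have e1 := (hD _ hn).unique (y₁ := x) (y₂ := x') ⟨h.1, by simpa using h.2.1⟩
          ⟨h'.1, by rw [e]; simpa using h'.2.1⟩
      subst e1
      simpa using e
    · intro a ha
      have hn : a ≠ 0 := by simpa using ha
      obtain ⟨x, hx, -⟩ := hD a hn
      refine ⟨(x, x + a), ?_, ?_⟩ <;> simp [hx, hn]
  rw [← h1, Finset.offDiag_card]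
  have := Nat.le_mul_self D.card
  omega

theorem stmt17 (k : ℕ) (h3 : 3 ∣ k) (hpp : IsPrimePow (k + 1)) :
    ∃ S : Finset (ZMod ((k ^ 2 + 3 * k + 3) / 3)),
      (0 : ZMod ((k ^ 2 + 3 * k + 3) / 3)) ∉ S ∧
      S.card = k ∧
      (∀ s ∈ S, -s ∉ S) ∧
      ∀ g : ZMod ((k ^ 2 + 3 * k + 3) / 3), g ≠ 0 →
        ((S ×ˢ S).filter (fun p => p.2 - p.1 = g)).card =
          if g ∈ S ∨ -g ∈ S then 1 else 3 := by
  obtain ⟨D, hD⟩ := singer_hom (k + 1) hpp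
  have hN : (k + 1) ^ 2 + (k + 1) + 1 = 3 * ((k ^ 2 + 3 * k + 3) / 3) := by
    obtain ⟨j, rfl⟩ := h3
    have : (3 * j) ^ 2 + 3 * (3 * j) + 3 = 3 * (3 * j ^ 2 + 3 * j + 1) := by ring
    rw [this, Nat.mul_div_cancel_left _ (by norm_num)]
    ring
  have hc := pds_card D hD
  rw [ZMod.card] at hc
  have hDc : D.card = k + 2 := by
    simp only [Nat.add_sub_cancel] at hc
    nlinarith
  clear hc
  have hv : 0 < (k ^ 2 + 3 * k + 3) / 3 := by
    have : 0 < (k + 1) ^ 2 + (k + 1) + 1 := by positivity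
    omega
  generalize (k ^ 2 + 3 * k + 3) / 3 = v at *
  generalize (k + 1) ^ 2 + (k + 1) + 1 = N at *
  subst hN
  have : NeZero v := ⟨hv.ne'⟩
  have : NeZero (3 * v) := ⟨by omega⟩
  have h3v : (v : ZMod (3 * v)) + v + v = 0 := by
    have := ZMod.natCast_self (3 * v)
    push_cast at this
    linear_combination this
  have ht : (v : ZMod (3 * v)) ≠ 0 := by
    rw [Ne, ZMod.natCast_eq_zero_iff]
    intro h
    have := Nat.le_of_dvd hv h
    omega
  have ht2 : (v : ZMod (3 * v)) ≠ -v := by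
    intro h
    apply ht
    linear_combination h3v - h
  let π : ZMod (3 * v) →+ ZMod v := (ZMod.castHom (Dvd.intro_left 3 rfl) (ZMod v)).toAddMonoidHom
  have hπ : ∀ j : ℕ, π (j : ZMod (3 * v)) = j := by
    intro j
    exact map_natCast (ZMod.castHom (Dvd.intro_left 3 rfl) (ZMod v)) j
  have hs : Function.Surjective π := fun x => ⟨(x.val : ZMod (3 * v)), by rw [hπ]; simp⟩
  have hker : ∀ x, π x = 0 ↔ x = 0 ∨ x = v ∨ x = -v := by
    intro x
    constructor
    · intro h
      have hx : ((x.val : ℕ) : ZMod (3 * v)) = x := by simp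
      have hlt := x.val_lt
      rw [← hx, hπ, ZMod.natCast_eq_zero_iff] at h
      obtain ⟨c, hc⟩ := h
      rw [hc] at hlt hx
      have : c < 3 := by
        rw [mul_comm 3] at hlt
        exact lt_of_mul_lt_mul_left hlt (Nat.zero_le _)
      rw [← hx]
      interval_cases c
      · simp
      · simp
      · right; right; push_cast; linear_combination h3v
    · rintro (rfl | rfl | rfl)
      · simp
      · rw [hπ]; simp
      · rw [map_neg, hπ]; simp
  obtain ⟨S, h0, hcS, h1, h2⟩ := nrd_of_pds π v ht hker
    (card_fiber_three π hs v ht ht2 hker) D hD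
  exact ⟨S, h0, by omega, h1, h2⟩
end
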